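/- Let θ be a ℂ-algebra automorphism of V = Ǔ^{≥0}_{r,s}(sl_3). Then there exist scalars a_1, a_2, b_1, b_2 ∈ ℂ^* and integers a, b, c, d satisfying b = c and a + b + d = 0, such that θ(K_1) = a_1 K_1, θ(K_2) = a_2 K_2, θ(E_1) = b_1 K_1^a K_2^b E_1, and θ(E_2) = b_2 K_1^c K_2^d E_2. -/

import Mathlib

/-! The algebra `V` is studied inside a quantum torus `QT ρ σ`, the group algebra of `ℤ⁵` with
multiplication twisted by a bicharacter, via the homomorphism `phi` with
`E₁ ↦ x`, `E₂ ↦ y + z x⁻¹`, `K₁ ↦ K₁`, `K₂ ↦ K₂` (so that `E₃ ↦ (r - s) z`).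
The ordered monomials `K₁^m K₂^n E₂^a E₃^b E₁^c` span `V` (`mem_span_vmono`), and their images have
distinct leading terms with respect to the `y`-exponent, so `phi` is injective (`phi_injective`).
Hence `V` is a domain. The group `ℤ⁵` has the two-unique-sums property, so the units of `QT` are
monomials; since the weights occurring in `V` are nonnegative, the units of `V` are the scalar
multiples of the `K₁^m K₂^n` (`eq_tor_of_mul_eq_one`).

An automorphism `θ` therefore sends `K₁`, `K₂` to scalar multiples of toral monomials. Comparing
scalars in the relations between the `K_i` and the `E_j`, multiplicative independence of `ρ`, `σ`
and nonnegativity of weights force `θ(K_i) ∈ ℂ* K_i` and force `θ(E_j)` to have the weight of `E_j`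
(`aut_weights`). So `θ(E_j) = p_j E_j`; the same holds for `θ⁻¹`, and cancelling `E_j` shows that
`p_j` is left invertible, thus a scalar multiple of a toral monomial (`eq_tor_mul`).
Finally, the coefficients of the image of the first Serre relation at two lattice points say that
two explicit monomials in `ρ` and `σ` both lie in `{r, s}`, which yields `b = c` and `a + b + d = 0`
(`exponents_eq`).
-/

noncomputable section

open FreeAlgebra

/-- The defining relations of the augmented Hopf algebra `Ǔ^{≥0}_{r,s}(sl₃)` (with
`r = ρ³`, `s = σ³`) as a quotient of the free algebra on six generators:
generator `0` is `E₁`, `1` is `E₂`, `2` is `K₁`, `3` is `K₁⁻¹`, `4` is `K₂`, `5` is `K₂⁻¹`. -/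
inductive VRel (ρ σ : ℂ) : FreeAlgebra ℂ (Fin 6) → FreeAlgebra ℂ (Fin 6) → Prop
  | k1inv : VRel ρ σ (ι ℂ (2 : Fin 6) * ι ℂ 3) 1
  | invk1 : VRel ρ σ (ι ℂ (3 : Fin 6) * ι ℂ 2) 1
  | k2inv : VRel ρ σ (ι ℂ (4 : Fin 6) * ι ℂ 5) 1
  | invk2 : VRel ρ σ (ι ℂ (5 : Fin 6) * ι ℂ 4) 1
  | k1k2 : VRel ρ σ (ι ℂ (2 : Fin 6) * ι ℂ 4) (ι ℂ (4 : Fin 6) * ι ℂ 2)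
  | k1e1 : VRel ρ σ (ι ℂ (2 : Fin 6) * ι ℂ 0) ((ρ * (σ ^ 2)⁻¹) • (ι ℂ (0 : Fin 6) * ι ℂ 2))
  | k1e2 : VRel ρ σ (ι ℂ (2 : Fin 6) * ι ℂ 1) ((ρ * σ) • (ι ℂ (1 : Fin 6) * ι ℂ 2))
  | k2e1 : VRel ρ σ (ι ℂ (4 : Fin 6) * ι ℂ 0) ((ρ⁻¹ * σ⁻¹) • (ι ℂ (0 : Fin 6) * ι ℂ 4))
  | k2e2 : VRel ρ σ (ι ℂ (4 : Fin 6) * ι ℂ 1) ((ρ ^ 2 * σ⁻¹) • (ι ℂ (1 : Fin 6) * ι ℂ 4))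
  | serre1 : VRel ρ σ
      (ι ℂ (0 : Fin 6) * ι ℂ 0 * ι ℂ 1 - (ρ ^ 3 + σ ^ 3) • (ι ℂ (0 : Fin 6) * ι ℂ 1 * ι ℂ 0)
        + (ρ ^ 3 * σ ^ 3) • (ι ℂ (1 : Fin 6) * ι ℂ 0 * ι ℂ 0)) 0
  | serre2 : VRel ρ σ
      (ι ℂ (0 : Fin 6) * ι ℂ 1 * ι ℂ 1 - (ρ ^ 3 + σ ^ 3) • (ι ℂ (1 : Fin 6) * ι ℂ 0 * ι ℂ 1)
        + (ρ ^ 3 * σ ^ 3) • (ι ℂ (1 : Fin 6) * ι ℂ 1 * ι ℂ 0)) 0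

/-- The augmented Hopf algebra `Ǔ^{≥0}_{r,s}(sl₃)`. -/
abbrev Vsl3 (ρ σ : ℂ) := RingQuot (VRel ρ σ)

def vE₁ (ρ σ : ℂ) : Vsl3 ρ σ := RingQuot.mkAlgHom ℂ (VRel ρ σ) (ι ℂ 0)
def vE₂ (ρ σ : ℂ) : Vsl3 ρ σ := RingQuot.mkAlgHom ℂ (VRel ρ σ) (ι ℂ 1)
def K₁ (ρ σ : ℂ) : Vsl3 ρ σ := RingQuot.mkAlgHom ℂ (VRel ρ σ) (ι ℂ 2)
def K₁inv (ρ σ : ℂ) : Vsl3 ρ σ := RingQuot.mkAlgHom ℂ (VRel ρ σ) (ι ℂ 3)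
def K₂ (ρ σ : ℂ) : Vsl3 ρ σ := RingQuot.mkAlgHom ℂ (VRel ρ σ) (ι ℂ 4)
def K₂inv (ρ σ : ℂ) : Vsl3 ρ σ := RingQuot.mkAlgHom ℂ (VRel ρ σ) (ι ℂ 5)
def vE₃ (ρ σ : ℂ) : Vsl3 ρ σ := vE₁ ρ σ * vE₂ ρ σ - σ ^ 3 • (vE₂ ρ σ * vE₁ ρ σ)

/-- Integer powers of `K₁`: for negative `m`, `K₁^m` means `(K₁⁻¹)^(-m)`. -/
def K₁z (ρ σ : ℂ) (m : ℤ) : Vsl3 ρ σ :=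
  if 0 ≤ m then K₁ ρ σ ^ m.toNat else K₁inv ρ σ ^ (-m).toNat

/-- Integer powers of `K₂`: for negative `n`, `K₂^n` means `(K₂⁻¹)^(-n)`. -/
def K₂z (ρ σ : ℂ) (n : ℤ) : Vsl3 ρ σ :=
  if 0 ≤ n then K₂ ρ σ ^ n.toNat else K₂inv ρ σ ^ (-n).toNat

/-! ### The quantum torus -/

/-- The lattice `ℤ⁵`; the point `(m, n, a, b, c)` stands for the ordered monomial
`K₁^m K₂^n y^a z^b x^c` of a quantum torus. -/
abbrev QLat := ℤ × ℤ × ℤ × ℤ × ℤ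

/-- The coefficient of `α₁` in the weight of a lattice point: `x`, `y`, `z` have weights
`α₁`, `α₂`, `α₁ + α₂`. -/
def wX (g : QLat) : ℤ := g.2.2.2.1 + g.2.2.2.2

/-- The coefficient of `α₂` in the weight of a lattice point. -/
def wY (g : QLat) : ℤ := g.2.2.1 + g.2.2.2.1

/-- Moving `K₁^m K₂^n` to the right past an element of weight `X α₁ + Y α₂` produces the scalar
`ρ ^ chiR m n X Y * σ ^ chiS m n X Y`. -/
def chiR (m n X Y : ℤ) : ℤ := m * (X + Y) + n * (2 * Y - X)

/-- See `chiR`. -/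
def chiS (m n X Y : ℤ) : ℤ := m * (Y - 2 * X) - n * (X + Y)

/-- The exponent of `ρ` in the cocycle of the quantum torus. -/
def expR (g h : QLat) : ℤ :=
  3 * (g.2.2.2.2 * h.2.2.2.1 + g.2.2.2.1 * h.2.2.1) - chiR h.1 h.2.1 (wX g) (wY g)

/-- The exponent of `σ` in the cocycle of the quantum torus. -/
def expS (g h : QLat) : ℤ :=
  3 * (g.2.2.2.2 * h.2.2.1) - chiS h.1 h.2.1 (wX g) (wY g)

/-- The bicharacter of the quantum torus: the product of the ordered monomials at `g` and `h` is
`coc ρ σ g h` times the ordered monomial at `g + h`. -/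
def coc (ρ σ : ℂˣ) (g h : QLat) : ℂˣ := ρ ^ expR g h * σ ^ expS g h

theorem coc_add_left (ρ σ : ℂˣ) (g h k : QLat) :
    coc ρ σ (g + h) k = coc ρ σ g k * coc ρ σ h k := by
  have h1 : expR (g + h) k = expR g k + expR h k := by
    simp only [expR, chiR, wX, wY, Prod.fst_add, Prod.snd_add]; ring
  have h2 : expS (g + h) k = expS g k + expS h k := by
    simp only [expS, chiS, wX, wY, Prod.fst_add, Prod.snd_add]; ring
  rw [coc, h1, h2, zpow_add, zpow_add, coc, coc]
  exact mul_mul_mul_comm _ _ _ _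

theorem coc_add_right (ρ σ : ℂˣ) (g h k : QLat) :
    coc ρ σ g (h + k) = coc ρ σ g h * coc ρ σ g k := by
  have h1 : expR g (h + k) = expR g h + expR g k := by
    simp only [expR, chiR, wX, wY, Prod.fst_add, Prod.snd_add]; ring
  have h2 : expS g (h + k) = expS g h + expS g k := by
    simp only [expS, chiS, wX, wY, Prod.fst_add, Prod.snd_add]; ring
  rw [coc, h1, h2, zpow_add, zpow_add, coc, coc]
  exact mul_mul_mul_comm _ _ _ _

theorem coc_zero_left (ρ σ : ℂˣ) (g : QLat) : coc ρ σ 0 g = 1 := by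
  simp [coc, expR, expS, chiR, chiS, wX, wY]

theorem coc_zero_right (ρ σ : ℂˣ) (g : QLat) : coc ρ σ g 0 = 1 := by
  simp [coc, expR, expS, chiR, chiS, wX, wY]

/-- The quantum torus: the group algebra of `QLat` with multiplication twisted by `coc ρ σ`. -/
def QT (_ρ _σ : ℂˣ) : Type := QLat →₀ ℂ

namespace QT

variable {ρ σ : ℂˣ}

instance : AddCommGroup (QT ρ σ) := inferInstanceAs (AddCommGroup (QLat →₀ ℂ))
instance : Module ℂ (QT ρ σ) := inferInstanceAs (Module ℂ (QLat →₀ ℂ))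

/-- The scalar multiple `c` of the ordered monomial at `g`. -/
def e (g : QLat) (c : ℂ) : QT ρ σ := Finsupp.single g c

/-- The coefficient of the ordered monomial at `g`. -/
def co (g : QLat) : QT ρ σ →ₗ[ℂ] ℂ := Finsupp.lapply g

/-- The set of lattice points with nonzero coefficient. -/
def supp (f : QT ρ σ) : Finset QLat := Finsupp.support f

theorem mem_supp {f : QT ρ σ} {g : QLat} : g ∈ supp f ↔ co g f ≠ 0 := Finsupp.mem_support_iff

theorem ext_co {f f' : QT ρ σ} (h : ∀ g, co g f = co g f') : f = f' := Finsupp.ext h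

theorem co_e (g h : QLat) (c : ℂ) : co g (e h c : QT ρ σ) = if h = g then c else 0 :=
  Finsupp.single_apply

theorem co_e_same (g : QLat) (c : ℂ) : co g (e g c : QT ρ σ) = c := Finsupp.single_eq_same

theorem smul_e (g : QLat) (c d : ℂ) : d • (e g c : QT ρ σ) = e g (d * c) :=
  Finsupp.smul_single _ _ _

theorem e_add (g : QLat) (c d : ℂ) : (e g (c + d) : QT ρ σ) = e g c + e g d :=
  Finsupp.single_add _ _ _

theorem e_zero (g : QLat) : (e g 0 : QT ρ σ) = 0 := Finsupp.single_zero _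

theorem induct {p : QT ρ σ → Prop} (f : QT ρ σ) (h0 : p 0) (ha : ∀ f g, p f → p g → p (f + g))
    (hs : ∀ g c, p (e g c)) : p f :=
  Finsupp.induction_linear (motive := p) f h0 ha hs

theorem eq_sum (f : QT ρ σ) : f = ∑ g ∈ supp f, e g (co g f) := (Finsupp.sum_single f).symm

/-- The linear extension of a function on lattice points. -/
def lc {M : Type*} [AddCommGroup M] [Module ℂ M] (F : QLat → M) : QT ρ σ →ₗ[ℂ] M :=
  Finsupp.linearCombination ℂ F

theorem lc_e {M : Type*} [AddCommGroup M] [Module ℂ M] (F : QLat → M) (g : QLat) (c : ℂ) :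
    lc F (e g c : QT ρ σ) = c • F g :=
  Finsupp.linearCombination_single _ _ _

/-- The twisted multiplication as a bilinear map. -/
def mulL (ρ σ : ℂˣ) : QT ρ σ →ₗ[ℂ] QT ρ σ →ₗ[ℂ] QT ρ σ :=
  lc fun g => lc fun h => e (g + h) (coc ρ σ g h : ℂ)

theorem mulL_e (g h : QLat) (c d : ℂ) :
    mulL ρ σ (e g c) (e h d) = e (g + h) (c * d * coc ρ σ g h) := by
  rw [mulL, lc_e, LinearMap.smul_apply, lc_e, smul_e, smul_e, mul_assoc]

instance : Mul (QT ρ σ) := ⟨fun f g => mulL ρ σ f g⟩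
instance : One (QT ρ σ) := ⟨e 0 1⟩

theorem mul_def (f g : QT ρ σ) : f * g = mulL ρ σ f g := rfl
theorem one_def : (1 : QT ρ σ) = e 0 1 := rfl

theorem e_mul_e (g h : QLat) (c d : ℂ) :
    (e g c * e h d : QT ρ σ) = e (g + h) (c * d * coc ρ σ g h) := mulL_e g h c d

instance : Ring (QT ρ σ) :=
  { (inferInstance : AddCommGroup (QT ρ σ)) with
    mul := (· * ·)
    one := 1
    left_distrib := fun a b c => by simp only [mul_def, map_add]
    right_distrib := fun a b c => by simp only [mul_def, map_add, LinearMap.add_apply]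
    zero_mul := fun a => by simp only [mul_def, map_zero, LinearMap.zero_apply]
    mul_zero := fun a => by simp only [mul_def, map_zero]
    one_mul := fun a => by
      rw [one_def]
      induction a using induct with
      | h0 => simp only [mul_def, map_zero]
      | ha f g hf hg => simp only [mul_def, map_add] at hf hg ⊢; rw [hf, hg]
      | hs g c => rw [e_mul_e, coc_zero_left]; simp
    mul_one := fun a => by
      rw [one_def]
      induction a using induct with
      | h0 => simp only [mul_def, map_zero, LinearMap.zero_apply]
      | ha f g hf hg => simp only [mul_def, map_add, LinearMap.add_apply] at hf hg ⊢; rw [hf, hg]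
      | hs g c => rw [e_mul_e, coc_zero_right]; simp
    mul_assoc := fun a b c => by
      induction a using induct with
      | h0 => simp only [mul_def, map_zero, LinearMap.zero_apply]
      | ha f g hf hg => simp only [mul_def, map_add, LinearMap.add_apply] at hf hg ⊢; rw [hf, hg]
      | hs g c₁ =>
        induction b using induct with
        | h0 => simp only [mul_def, map_zero, LinearMap.zero_apply]
        | ha f g hf hg => simp only [mul_def, map_add, LinearMap.add_apply] at hf hg ⊢; rw [hf, hg]
        | hs h c₂ =>
          induction c using induct with
          | h0 => simp only [mul_def, map_zero]
          | ha f g hf hg => simp only [mul_def, map_add] at hf hg ⊢; rw [hf, hg]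
          | hs k c₃ =>
            simp only [e_mul_e, coc_add_left, coc_add_right, add_assoc, Units.val_mul]
            congr 1
            ring }

instance : Algebra ℂ (QT ρ σ) :=
  Algebra.ofModule
    (fun c f g => by simp only [mul_def, map_smul, LinearMap.smul_apply])
    (fun c f g => by simp only [mul_def, map_smul])

theorem mul_eq_sum (f f' : QT ρ σ) :
    f * f' = ∑ p ∈ supp f ×ˢ supp f', e (p.1 + p.2) (co p.1 f * co p.2 f' * coc ρ σ p.1 p.2) := by
  conv_lhs => rw [eq_sum f, eq_sum f', Finset.sum_mul_sum, ← Finset.sum_product']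
  exact Finset.sum_congr rfl fun p _ => e_mul_e _ _ _ _

theorem co_mul_ne_zero {f f' : QT ρ σ} {k : QLat} (h : co k (f * f') ≠ 0) :
    ∃ g h, co g f ≠ 0 ∧ co h f' ≠ 0 ∧ g + h = k := by
  rw [mul_eq_sum, map_sum] at h
  obtain ⟨p, hp, hne⟩ := Finset.exists_ne_zero_of_sum_ne_zero h
  rw [Finset.mem_product, mem_supp, mem_supp] at hp
  refine ⟨p.1, p.2, hp.1, hp.2, ?_⟩
  by_contra hk
  exact hne (by rw [co_e, if_neg hk])

/-- If `g + h` decomposes in only one way over the two supports, the coefficient of a product at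
`g + h` is the twisted product of the coefficients at `g` and `h`. -/
theorem co_mul_unique {f f' : QT ρ σ} {g h : QLat}
    (hu : ∀ g' h', co g' f ≠ 0 → co h' f' ≠ 0 → g' + h' = g + h → g' = g ∧ h' = h) :
    co (g + h) (f * f') = co g f * co h f' * coc ρ σ g h := by
  rw [mul_eq_sum, map_sum, Finset.sum_eq_single (g, h)]
  · exact co_e_same _ _
  · rintro ⟨a, b⟩ hp hne
    rw [Finset.mem_product, mem_supp, mem_supp] at hp
    rw [co_e, if_neg]
    intro hab
    obtain ⟨rfl, rfl⟩ := hu a b hp.1 hp.2 hab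
    exact hne rfl
  · intro hp
    rw [co_e_same]
    rw [Finset.mem_product, mem_supp, mem_supp] at hp
    by_cases h1 : co g f = 0
    · simp [h1]
    · have h2 : co h f' = 0 := by by_contra h2; exact hp ⟨h1, h2⟩
      simp [h2]

theorem co_mul_e (f : QT ρ σ) (g h : QLat) (c : ℂ) :
    co (g + h) (f * e h c) = co g f * c * coc ρ σ g h := by
  rw [co_mul_unique, co_e_same]
  intro g' h' _ h2 h3
  rw [co_e] at h2
  have : h = h' := by by_contra hh; simp [hh] at h2
  subst this
  exact ⟨add_right_cancel h3, rfl⟩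

theorem co_e_mul (f : QT ρ σ) (g h : QLat) (c : ℂ) :
    co (g + h) (e g c * f) = c * co h f * coc ρ σ g h := by
  rw [co_mul_unique, co_e_same]
  intro g' h' h2 _ h3
  rw [co_e] at h2
  have : g = g' := by by_contra hh; simp [hh] at h2
  subst this
  exact ⟨rfl, add_left_cancel h3⟩

theorem co_ne_of_uniqueAdd {f f' : QT ρ σ} {g h : QLat} (hg : g ∈ supp f) (hh : h ∈ supp f')
    (hu : UniqueAdd (supp f) (supp f') g h) : co (g + h) (f * f') ≠ 0 := by
  rw [co_mul_unique]
  · rw [mem_supp] at hg hh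
    exact _root_.mul_ne_zero (_root_.mul_ne_zero hg hh) (Units.ne_zero _)
  · intro g' h' h1 h2 h3
    exact hu (mem_supp.2 h1) (mem_supp.2 h2) h3

theorem mul_ne_zero {f f' : QT ρ σ} (hf : f ≠ 0) (hf' : f' ≠ 0) : f * f' ≠ 0 := by
  have aux : ∀ F : QT ρ σ, F ≠ 0 → (supp F).Nonempty := by
    intro F hF
    rw [Finset.nonempty_iff_ne_empty]
    intro h0
    refine hF (ext_co fun g => ?_)
    rw [map_zero]
    by_contra hc
    exact Finset.notMem_empty g (h0 ▸ mem_supp.2 hc)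
  obtain ⟨g, hg, h, hh, hu⟩ := UniqueSums.uniqueAdd_of_nonempty (aux f hf) (aux f' hf')
  intro h0
  exact co_ne_of_uniqueAdd hg hh hu (by rw [h0, map_zero])

/-- Invertible elements of the quantum torus are scalar multiples of monomials, because `ℤ⁵` is a
two-unique-sums group. -/
theorem eq_e_of_mul_eq_one {f f' : QT ρ σ} (h : f * f' = 1) :
    ∃ g c c', c ≠ 0 ∧ c' ≠ 0 ∧ f = e g c ∧ f' = e (-g) c' := by
  have key : ∀ k, co k (f * f') ≠ 0 → k = 0 := by
    intro k hk
    rw [h, one_def, co_e] at hk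
    by_contra hne
    exact hk (if_neg (Ne.symm hne))
  have hz : co 0 (f * f') ≠ 0 := by rw [h, one_def, co_e_same]; exact one_ne_zero
  obtain ⟨g0, h0, hg0, hh0, hgh⟩ := co_mul_ne_zero hz
  have hcard : (supp f).card * (supp f').card ≤ 1 := by
    by_contra hc
    obtain ⟨p1, hp1, p2, hp2, hne, hu1, hu2⟩ :=
      TwoUniqueSums.uniqueAdd_of_one_lt_card (not_le.1 hc)
    rw [Finset.mem_product] at hp1 hp2
    have e1 := key _ (co_ne_of_uniqueAdd hp1.1 hp1.2 hu1)
    have e2 := key _ (co_ne_of_uniqueAdd hp2.1 hp2.2 hu2)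
    obtain ⟨h1, h2⟩ := hu1 hp2.1 hp2.2 (e2.trans e1.symm)
    exact hne (Prod.ext h1.symm h2.symm)
  have c1 : 0 < (supp f).card := Finset.card_pos.2 ⟨g0, mem_supp.2 hg0⟩
  have c2 : 0 < (supp f').card := Finset.card_pos.2 ⟨h0, mem_supp.2 hh0⟩
  have d1 : (supp f).card ≤ 1 := by nlinarith
  have d2 : (supp f').card ≤ 1 := by nlinarith
  have aux : ∀ (F : QT ρ σ) (k : QLat), co k F ≠ 0 → (supp F).card ≤ 1 → F = e k (co k F) := by
    intro F k hk hF
    refine ext_co fun l => ?_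
    rw [co_e]
    split_ifs with hl
    · rw [hl]
    · by_contra hc
      exact hl (Finset.card_le_one.1 hF _ (mem_supp.2 hk) _ (mem_supp.2 hc))
  refine ⟨g0, co g0 f, co h0 f', hg0, hh0, aux f g0 hg0 d1, ?_⟩
  rw [← eq_neg_of_add_eq_zero_right hgh]
  exact aux f' h0 hh0 d2

end QT

/-! ### The homomorphism to the quantum torus -/

section Model

variable (ρ σ : ℂˣ)

/-- The images of the six generators in the quantum torus. -/
def genImg : Fin 6 → QT ρ σ :=
  ![QT.e (0, 0, 0, 0, 1) 1, QT.e (0, 0, 1, 0, 0) 1 + QT.e (0, 0, 0, 1, -1) 1,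
    QT.e (1, 0, 0, 0, 0) 1, QT.e (-1, 0, 0, 0, 0) 1,
    QT.e (0, 1, 0, 0, 0) 1, QT.e (0, -1, 0, 0, 0) 1]

theorem genImg_rel ⦃x y : FreeAlgebra ℂ (Fin 6)⦄ (h : VRel ρ σ x y) :
    FreeAlgebra.lift ℂ (genImg ρ σ) x = FreeAlgebra.lift ℂ (genImg ρ σ) y := by
  have hr : (ρ : ℂ) ≠ 0 := ρ.ne_zero
  have hs : (σ : ℂ) ≠ 0 := σ.ne_zero
  have e0 : genImg ρ σ 0 = QT.e (0, 0, 0, 0, 1) 1 := rfl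
  have e1 : genImg ρ σ 1 = QT.e (0, 0, 1, 0, 0) 1 + QT.e (0, 0, 0, 1, -1) 1 := rfl
  have e2 : genImg ρ σ 2 = QT.e (1, 0, 0, 0, 0) 1 := rfl
  have e3 : genImg ρ σ 3 = QT.e (-1, 0, 0, 0, 0) 1 := rfl
  have e4 : genImg ρ σ 4 = QT.e (0, 1, 0, 0, 0) 1 := rfl
  have e5 : genImg ρ σ 5 = QT.e (0, -1, 0, 0, 0) 1 := rfl
  have hp3 : (ρ ^ (3 : ℤ) : ℂˣ) = ρ ^ 3 := by norm_cast
  have hs3 : (σ ^ (3 : ℤ) : ℂˣ) = σ ^ 3 := by norm_cast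
  induction h <;>
    simp only [map_mul, map_add, map_sub, map_smul, map_one, map_zero, FreeAlgebra.lift_ι_apply,
      e0, e1, e2, e3, e4, e5, mul_add, add_mul, QT.e_mul_e, coc, expR, expS, chiR, chiS, wX, wY,
      Prod.mk_add_mk, QT.one_def, QT.smul_e, smul_add] <;>
    norm_num [hp3, hs3]
  case k1inv | invk1 | k2inv | invk2 => rfl
  all_goals
    refine QT.ext_co fun g => ?_
    simp only [map_add, map_sub, map_zero, QT.co_e]
    split_ifs <;> field_simp <;> ring

/-- The algebra map from `V` to the quantum torus with
`E₁ ↦ x`, `E₂ ↦ y + z x⁻¹`, `K₁ ↦ K₁`, `K₂ ↦ K₂`. -/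
def phi : Vsl3 (ρ : ℂ) (σ : ℂ) →ₐ[ℂ] QT ρ σ :=
  RingQuot.liftAlgHom ℂ ⟨FreeAlgebra.lift ℂ (genImg ρ σ), genImg_rel ρ σ⟩

theorem phi_mk (i : Fin 6) :
    phi ρ σ (RingQuot.mkAlgHom ℂ (VRel ρ σ) (ι ℂ i)) = genImg ρ σ i := by
  rw [phi, RingQuot.liftAlgHom_mkAlgHom_apply, FreeAlgebra.lift_ι_apply]

theorem phi_E₁ : phi ρ σ (vE₁ ρ σ) = QT.e (0, 0, 0, 0, 1) 1 := phi_mk ρ σ 0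
theorem phi_E₂ : phi ρ σ (vE₂ ρ σ) = QT.e (0, 0, 1, 0, 0) 1 + QT.e (0, 0, 0, 1, -1) 1 :=
  phi_mk ρ σ 1
theorem phi_K₁ : phi ρ σ (K₁ ρ σ) = QT.e (1, 0, 0, 0, 0) 1 := phi_mk ρ σ 2
theorem phi_K₁inv : phi ρ σ (K₁inv ρ σ) = QT.e (-1, 0, 0, 0, 0) 1 := phi_mk ρ σ 3
theorem phi_K₂ : phi ρ σ (K₂ ρ σ) = QT.e (0, 1, 0, 0, 0) 1 := phi_mk ρ σ 4
theorem phi_K₂inv : phi ρ σ (K₂inv ρ σ) = QT.e (0, -1, 0, 0, 0) 1 := phi_mk ρ σ 5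

theorem phi_E₃ : phi ρ σ (vE₃ ρ σ) = QT.e (0, 0, 0, 1, 0) ((ρ : ℂ) ^ 3 - (σ : ℂ) ^ 3) := by
  have hp3 : (ρ ^ (3 : ℤ) : ℂˣ) = ρ ^ 3 := by norm_cast
  have hs3 : (σ ^ (3 : ℤ) : ℂˣ) = σ ^ 3 := by norm_cast
  rw [vE₃, map_sub, map_smul, map_mul, map_mul, phi_E₁, phi_E₂]
  simp only [mul_add, add_mul, QT.e_mul_e, coc, expR, expS, chiR, chiS, wX, wY,
      Prod.mk_add_mk, QT.smul_e, smul_add]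
  norm_num [hp3, hs3]
  refine QT.ext_co fun g => ?_
  simp only [map_sub, QT.co_e]
  split_ifs <;> ring

/-! ### The defining relations inside `V` -/

theorem k1_mul_inv : K₁ (ρ : ℂ) σ * K₁inv ρ σ = 1 := by
  simpa [K₁, K₁inv] using RingQuot.mkAlgHom_rel ℂ (VRel.k1inv (ρ := (ρ : ℂ)) (σ := (σ : ℂ)))

theorem k1_inv_mul : K₁inv (ρ : ℂ) σ * K₁ ρ σ = 1 := by
  simpa [K₁, K₁inv] using RingQuot.mkAlgHom_rel ℂ (VRel.invk1 (ρ := (ρ : ℂ)) (σ := (σ : ℂ)))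

theorem k2_mul_inv : K₂ (ρ : ℂ) σ * K₂inv ρ σ = 1 := by
  simpa [K₂, K₂inv] using RingQuot.mkAlgHom_rel ℂ (VRel.k2inv (ρ := (ρ : ℂ)) (σ := (σ : ℂ)))

theorem k2_inv_mul : K₂inv (ρ : ℂ) σ * K₂ ρ σ = 1 := by
  simpa [K₂, K₂inv] using RingQuot.mkAlgHom_rel ℂ (VRel.invk2 (ρ := (ρ : ℂ)) (σ := (σ : ℂ)))

theorem k1_k2 : K₁ (ρ : ℂ) σ * K₂ ρ σ = K₂ ρ σ * K₁ ρ σ := by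
  simpa [K₁, K₂] using RingQuot.mkAlgHom_rel ℂ (VRel.k1k2 (ρ := (ρ : ℂ)) (σ := (σ : ℂ)))

theorem k1_e1 : K₁ (ρ : ℂ) σ * vE₁ ρ σ = ((ρ : ℂ) * ((σ : ℂ) ^ 2)⁻¹) • (vE₁ ρ σ * K₁ ρ σ) := by
  simpa only [map_mul, map_smul, K₁, K₂, vE₁, vE₂] using
    RingQuot.mkAlgHom_rel ℂ (VRel.k1e1 (ρ := (ρ : ℂ)) (σ := (σ : ℂ)))

theorem k1_e2 : K₁ (ρ : ℂ) σ * vE₂ ρ σ = ((ρ : ℂ) * (σ : ℂ)) • (vE₂ ρ σ * K₁ ρ σ) := by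
  simpa only [map_mul, map_smul, K₁, K₂, vE₁, vE₂] using
    RingQuot.mkAlgHom_rel ℂ (VRel.k1e2 (ρ := (ρ : ℂ)) (σ := (σ : ℂ)))

theorem k2_e1 : K₂ (ρ : ℂ) σ * vE₁ ρ σ = ((ρ : ℂ)⁻¹ * (σ : ℂ)⁻¹) • (vE₁ ρ σ * K₂ ρ σ) := by
  simpa only [map_mul, map_smul, K₁, K₂, vE₁, vE₂] using
    RingQuot.mkAlgHom_rel ℂ (VRel.k2e1 (ρ := (ρ : ℂ)) (σ := (σ : ℂ)))

theorem k2_e2 : K₂ (ρ : ℂ) σ * vE₂ ρ σ = ((ρ : ℂ) ^ 2 * (σ : ℂ)⁻¹) • (vE₂ ρ σ * K₂ ρ σ) := by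
  simpa only [map_mul, map_smul, K₁, K₂, vE₁, vE₂] using
    RingQuot.mkAlgHom_rel ℂ (VRel.k2e2 (ρ := (ρ : ℂ)) (σ := (σ : ℂ)))

theorem v_serre1 : vE₁ (ρ : ℂ) σ * vE₁ ρ σ * vE₂ ρ σ
    - ((ρ : ℂ) ^ 3 + (σ : ℂ) ^ 3) • (vE₁ ρ σ * vE₂ ρ σ * vE₁ ρ σ)
    + ((ρ : ℂ) ^ 3 * (σ : ℂ) ^ 3) • (vE₂ ρ σ * vE₁ ρ σ * vE₁ ρ σ) = 0 := by
  simpa only [map_mul, map_smul, map_add, map_sub, map_zero, vE₁, vE₂] using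
    RingQuot.mkAlgHom_rel ℂ (VRel.serre1 (ρ := (ρ : ℂ)) (σ := (σ : ℂ)))

theorem v_serre2 : vE₁ (ρ : ℂ) σ * vE₂ ρ σ * vE₂ ρ σ
    - ((ρ : ℂ) ^ 3 + (σ : ℂ) ^ 3) • (vE₂ ρ σ * vE₁ ρ σ * vE₂ ρ σ)
    + ((ρ : ℂ) ^ 3 * (σ : ℂ) ^ 3) • (vE₂ ρ σ * vE₂ ρ σ * vE₁ ρ σ) = 0 := by
  simpa only [map_mul, map_smul, map_add, map_sub, map_zero, vE₁, vE₂] using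
    RingQuot.mkAlgHom_rel ℂ (VRel.serre2 (ρ := (ρ : ℂ)) (σ := (σ : ℂ)))

theorem e1_e2 : vE₁ (ρ : ℂ) σ * vE₂ ρ σ = (σ : ℂ) ^ 3 • (vE₂ ρ σ * vE₁ ρ σ) + vE₃ ρ σ := by
  rw [vE₃]; abel

theorem e1_e3 : vE₁ (ρ : ℂ) σ * vE₃ ρ σ = (ρ : ℂ) ^ 3 • (vE₃ ρ σ * vE₁ ρ σ) := by
  have h := v_serre1 ρ σ
  rw [← sub_eq_zero, ← h, vE₃]
  simp only [mul_sub, sub_mul, mul_smul_comm, smul_mul_assoc, mul_assoc, smul_sub, add_smul,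
    smul_smul]
  module

theorem e3_e2 : vE₃ (ρ : ℂ) σ * vE₂ ρ σ = (ρ : ℂ) ^ 3 • (vE₂ ρ σ * vE₃ ρ σ) := by
  have h := v_serre2 ρ σ
  rw [← sub_eq_zero, ← h, vE₃]
  simp only [mul_sub, sub_mul, mul_smul_comm, smul_mul_assoc, mul_assoc, smul_sub, add_smul,
    smul_smul]
  module

/-- `K₁` as a unit of `V`. -/
def uK₁ : (Vsl3 (ρ : ℂ) (σ : ℂ))ˣ := ⟨K₁ ρ σ, K₁inv ρ σ, k1_mul_inv ρ σ, k1_inv_mul ρ σ⟩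

/-- `K₂` as a unit of `V`. -/
def uK₂ : (Vsl3 (ρ : ℂ) (σ : ℂ))ˣ := ⟨K₂ ρ σ, K₂inv ρ σ, k2_mul_inv ρ σ, k2_inv_mul ρ σ⟩

theorem K₁z_eq (m : ℤ) : K₁z (ρ : ℂ) σ m = ((uK₁ ρ σ ^ m : (Vsl3 (ρ : ℂ) (σ : ℂ))ˣ) : Vsl3 _ _) := by
  rw [K₁z]
  split_ifs with h
  · lift m to ℕ using h
    simp [uK₁]
  · obtain ⟨k, hk⟩ : ∃ k : ℕ, m = -k := ⟨(-m).toNat, by omega⟩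
    subst hk
    rw [zpow_neg, zpow_natCast, ← inv_pow]
    simp [uK₁]

theorem K₂z_eq (m : ℤ) : K₂z (ρ : ℂ) σ m = ((uK₂ ρ σ ^ m : (Vsl3 (ρ : ℂ) (σ : ℂ))ˣ) : Vsl3 _ _) := by
  rw [K₂z]
  split_ifs with h
  · lift m to ℕ using h
    simp [uK₂]
  · obtain ⟨k, hk⟩ : ∃ k : ℕ, m = -k := ⟨(-m).toNat, by omega⟩
    subst hk
    rw [zpow_neg, zpow_natCast, ← inv_pow]
    simp [uK₂]

theorem uK_comm : Commute (uK₁ ρ σ) (uK₂ ρ σ) := Units.ext (k1_k2 ρ σ)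

/-- The toral monomial `K₁^m K₂^n` as a unit of `V`. -/
def tor (m n : ℤ) : (Vsl3 (ρ : ℂ) (σ : ℂ))ˣ := uK₁ ρ σ ^ m * uK₂ ρ σ ^ n

theorem tor_eq (m n : ℤ) : (tor ρ σ m n : Vsl3 (ρ : ℂ) (σ : ℂ)) = K₁z ρ σ m * K₂z ρ σ n := by
  rw [K₁z_eq, K₂z_eq, tor, Units.val_mul]

theorem tor_zero : tor ρ σ 0 0 = 1 := by simp [tor]

theorem tor_mul (m n m' n' : ℤ) : tor ρ σ m n * tor ρ σ m' n' = tor ρ σ (m + m') (n + n') := by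
  have h : Commute (uK₂ ρ σ ^ n) (uK₁ ρ σ ^ m') := ((uK_comm ρ σ).symm.zpow_left n).zpow_right m'
  rw [tor, tor, tor, zpow_add, zpow_add]
  calc _ = uK₁ ρ σ ^ m * (uK₂ ρ σ ^ n * uK₁ ρ σ ^ m') * uK₂ ρ σ ^ n' := by group
    _ = _ := by rw [h.eq]; group

theorem phi_tor (m n : ℤ) : phi ρ σ (tor ρ σ m n : Vsl3 (ρ : ℂ) (σ : ℂ)) = QT.e (m, n, 0, 0, 0) 1 := by
  have hc : ∀ g h : QLat, g.2.2 = 0 → (QT.e g 1 * QT.e h 1 : QT ρ σ) = QT.e (g + h) 1 := by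
    rintro ⟨m, n, a, b, c⟩ h hg
    simp only [Prod.mk_eq_zero] at hg
    obtain ⟨rfl, rfl, rfl⟩ := hg
    rw [QT.e_mul_e]
    simp [coc, expR, expS, chiR, chiS, wX, wY]
  have h1 : ∀ k : ℕ, phi ρ σ (K₁ ρ σ ^ k) = QT.e ((k : ℤ), 0, 0, 0, 0) 1 := by
    intro k
    induction k with
    | zero => simp [QT.one_def]; rfl
    | succ k ih => rw [pow_succ, map_mul, ih, phi_K₁, hc _ _ rfl]; simp
  have h2 : ∀ k : ℕ, phi ρ σ (K₁inv ρ σ ^ k) = QT.e (-(k : ℤ), 0, 0, 0, 0) 1 := by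
    intro k
    induction k with
    | zero => simp [QT.one_def]; rfl
    | succ k ih => rw [pow_succ, map_mul, ih, phi_K₁inv, hc _ _ rfl]; simp [add_comm]
  have h3 : ∀ k : ℕ, phi ρ σ (K₂ ρ σ ^ k) = QT.e (0, (k : ℤ), 0, 0, 0) 1 := by
    intro k
    induction k with
    | zero => simp [QT.one_def]; rfl
    | succ k ih => rw [pow_succ, map_mul, ih, phi_K₂, hc _ _ rfl]; simp
  have h4 : ∀ k : ℕ, phi ρ σ (K₂inv ρ σ ^ k) = QT.e (0, -(k : ℤ), 0, 0, 0) 1 := by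
    intro k
    induction k with
    | zero => simp [QT.one_def]; rfl
    | succ k ih => rw [pow_succ, map_mul, ih, phi_K₂inv, hc _ _ rfl]; simp [add_comm]
  have h5 : phi ρ σ (K₁z ρ σ m) = QT.e (m, 0, 0, 0, 0) 1 := by
    rw [K₁z]
    split_ifs with h
    · rw [h1, Int.toNat_of_nonneg h]
    · rw [h2, Int.toNat_of_nonneg (by omega), neg_neg]
  have h6 : phi ρ σ (K₂z ρ σ n) = QT.e (0, n, 0, 0, 0) 1 := by
    rw [K₂z]
    split_ifs with h
    · rw [h3, Int.toNat_of_nonneg h]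
    · rw [h4, Int.toNat_of_nonneg (by omega), neg_neg]
  rw [tor_eq, map_mul, h5, h6, hc _ _ rfl]
  simp

/-! ### Spanning by ordered monomials -/

theorem zpow_qcomm {A : Type*} [Ring A] [Algebra ℂ A] {u : Aˣ} {x : A} {c : ℂ} (hc : c ≠ 0)
    (h : (u : A) * x = c • (x * u)) (m : ℤ) :
    ∃ d : ℂ, x * ((u ^ m : Aˣ) : A) = d • (((u ^ m : Aˣ) : A) * x) := by
  have h1 : x * (u : A) = c⁻¹ • ((u : A) * x) := by rw [h, inv_smul_smul₀ hc]
  have h2 : x * ((u⁻¹ : Aˣ) : A) = c • (((u⁻¹ : Aˣ) : A) * x) := by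
    rw [← Units.inv_mul_cancel_left u (x * _), ← mul_assoc (u : A), h, smul_mul_assoc,
      Units.mul_inv_cancel_right, mul_smul_comm]
  induction m with
  | zero => exact ⟨1, by simp⟩
  | succ k ih =>
    obtain ⟨d, hd⟩ := ih
    refine ⟨d * c⁻¹, ?_⟩
    rw [zpow_add_one, Units.val_mul, ← mul_assoc, hd, smul_mul_assoc, mul_assoc, h1,
      mul_smul_comm, smul_smul, mul_assoc]
  | pred k ih =>
    obtain ⟨d, hd⟩ := ih
    refine ⟨d * c, ?_⟩
    rw [zpow_sub_one, Units.val_mul, ← mul_assoc, hd, smul_mul_assoc, mul_assoc, h2,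
      mul_smul_comm, smul_smul, mul_assoc]

theorem e1_tor (m n : ℤ) : ∃ d : ℂ, vE₁ (ρ : ℂ) σ * (tor ρ σ m n : Vsl3 (ρ : ℂ) (σ : ℂ)) =
    d • ((tor ρ σ m n : Vsl3 (ρ : ℂ) (σ : ℂ)) * vE₁ ρ σ) := by
  obtain ⟨d, hd⟩ := zpow_qcomm (u := uK₁ ρ σ) (by simp) (k1_e1 ρ σ) m
  obtain ⟨d', hd'⟩ := zpow_qcomm (u := uK₂ ρ σ) (by simp) (k2_e1 ρ σ) n
  refine ⟨d * d', ?_⟩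
  rw [tor, Units.val_mul, ← mul_assoc, hd, smul_mul_assoc, mul_assoc, hd', mul_smul_comm,
    smul_smul, mul_assoc]

theorem e2_tor (m n : ℤ) : ∃ d : ℂ, vE₂ (ρ : ℂ) σ * (tor ρ σ m n : Vsl3 (ρ : ℂ) (σ : ℂ)) =
    d • ((tor ρ σ m n : Vsl3 (ρ : ℂ) (σ : ℂ)) * vE₂ ρ σ) := by
  obtain ⟨d, hd⟩ := zpow_qcomm (u := uK₁ ρ σ) (by simp) (k1_e2 ρ σ) m
  obtain ⟨d', hd'⟩ := zpow_qcomm (u := uK₂ ρ σ) (by simp) (k2_e2 ρ σ) n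
  refine ⟨d * d', ?_⟩
  rw [tor, Units.val_mul, ← mul_assoc, hd, smul_mul_assoc, mul_assoc, hd', mul_smul_comm,
    smul_smul, mul_assoc]

/-- The ordered monomial `E₂^a E₃^b E₁^c` of the positive part. -/
def pmono (j : ℕ × ℕ × ℕ) : Vsl3 (ρ : ℂ) (σ : ℂ) :=
  vE₂ ρ σ ^ j.1 * (vE₃ ρ σ ^ j.2.1 * vE₁ ρ σ ^ j.2.2)

/-- The ordered monomial `K₁^m K₂^n E₂^a E₃^b E₁^c`. -/
def vmono (i : ℤ × ℤ × ℕ × ℕ × ℕ) : Vsl3 (ρ : ℂ) (σ : ℂ) :=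
  (tor ρ σ i.1 i.2.1 : Vsl3 (ρ : ℂ) (σ : ℂ)) * pmono ρ σ i.2.2

theorem mul_mem_of_range {A : Type*} [Ring A] [Algebra ℂ A] {I : Type*} {b : I → A} {x : A}
    {S : Submodule ℂ A} (h : ∀ i, x * b i ∈ S) {w : A}
    (hw : w ∈ Submodule.span ℂ (Set.range b)) : x * w ∈ S := by
  have : Submodule.span ℂ (Set.range b) ≤ S.comap (LinearMap.mulLeft ℂ x) := by
    rw [Submodule.span_le]
    rintro _ ⟨i, rfl⟩
    exact h i
  exact this hw

theorem e2_mul_pspan {w : Vsl3 (ρ : ℂ) (σ : ℂ)}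
    (hw : w ∈ Submodule.span ℂ (Set.range (pmono ρ σ))) :
    vE₂ ρ σ * w ∈ Submodule.span ℂ (Set.range (pmono ρ σ)) := by
  refine mul_mem_of_range (fun j => ?_) hw
  refine Submodule.subset_span ⟨(j.1 + 1, j.2), ?_⟩
  rw [pmono, pmono, pow_succ', mul_assoc]

theorem e3_pow_e2 (a : ℕ) : vE₃ (ρ : ℂ) σ * vE₂ ρ σ ^ a =
    ((ρ : ℂ) ^ 3) ^ a • (vE₂ ρ σ ^ a * vE₃ ρ σ) := by
  induction a with
  | zero => simp
  | succ a ih =>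
    rw [pow_succ, ← mul_assoc, ih, smul_mul_assoc, mul_assoc, e3_e2, mul_smul_comm, smul_smul,
      mul_assoc, pow_succ (_ ^ 3)]

theorem e3_mul_pspan {w : Vsl3 (ρ : ℂ) (σ : ℂ)}
    (hw : w ∈ Submodule.span ℂ (Set.range (pmono ρ σ))) :
    vE₃ ρ σ * w ∈ Submodule.span ℂ (Set.range (pmono ρ σ)) := by
  refine mul_mem_of_range (fun j => ?_) hw
  rw [pmono, ← mul_assoc, e3_pow_e2, smul_mul_assoc]
  refine Submodule.smul_mem _ _ (Submodule.subset_span ⟨(j.1, j.2.1 + 1, j.2.2), ?_⟩)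
  simp only [pmono, pow_succ', mul_assoc]

theorem e1_pow_e3 (b : ℕ) : vE₁ (ρ : ℂ) σ * vE₃ ρ σ ^ b =
    ((ρ : ℂ) ^ 3) ^ b • (vE₃ ρ σ ^ b * vE₁ ρ σ) := by
  induction b with
  | zero => simp
  | succ a ih =>
    rw [pow_succ, ← mul_assoc, ih, smul_mul_assoc, mul_assoc, e1_e3, mul_smul_comm, smul_smul,
      mul_assoc, pow_succ (_ ^ 3)]

theorem e1_mul_pspan {w : Vsl3 (ρ : ℂ) (σ : ℂ)}
    (hw : w ∈ Submodule.span ℂ (Set.range (pmono ρ σ))) :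
    vE₁ ρ σ * w ∈ Submodule.span ℂ (Set.range (pmono ρ σ)) := by
  refine mul_mem_of_range ?_ hw
  rintro ⟨a, b, c⟩
  induction a with
  | zero =>
    have : vE₁ ρ σ * pmono ρ σ (0, b, c) = ((ρ : ℂ) ^ 3) ^ b • pmono ρ σ (0, b, c + 1) := by
      simp only [pmono, pow_zero, one_mul]
      rw [← mul_assoc, e1_pow_e3, smul_mul_assoc, mul_assoc, pow_succ' (vE₁ _ _)]
    rw [this]
    exact Submodule.smul_mem _ _ (Submodule.subset_span ⟨_, rfl⟩)
  | succ a ih =>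
    have : vE₁ ρ σ * pmono ρ σ (a + 1, b, c) = (σ : ℂ) ^ 3 • (vE₂ ρ σ * (vE₁ ρ σ *
        pmono ρ σ (a, b, c))) + vE₃ ρ σ * pmono ρ σ (a, b, c) := by
      have h1 : pmono ρ σ (a + 1, b, c) = vE₂ ρ σ * pmono ρ σ (a, b, c) := by
        simp only [pmono, pow_succ', mul_assoc]
      rw [h1, ← mul_assoc, e1_e2, add_mul, smul_mul_assoc, mul_assoc]
    rw [this]
    exact Submodule.add_mem _ (Submodule.smul_mem _ _ (e2_mul_pspan ρ σ ih))
      (e3_mul_pspan ρ σ (Submodule.subset_span ⟨_, rfl⟩))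

theorem tor_mul_pspan (m n : ℤ) {w : Vsl3 (ρ : ℂ) (σ : ℂ)}
    (hw : w ∈ Submodule.span ℂ (Set.range (pmono ρ σ))) :
    (tor ρ σ m n : Vsl3 (ρ : ℂ) (σ : ℂ)) * w ∈ Submodule.span ℂ (Set.range (vmono ρ σ)) := by
  refine mul_mem_of_range (fun j => ?_) hw
  exact Submodule.subset_span ⟨(m, n, j), rfl⟩

theorem gen_mul_span (i : Fin 6) {w : Vsl3 (ρ : ℂ) (σ : ℂ)}
    (hw : w ∈ Submodule.span ℂ (Set.range (vmono ρ σ))) :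
    RingQuot.mkAlgHom ℂ (VRel ρ σ) (ι ℂ i) * w ∈ Submodule.span ℂ (Set.range (vmono ρ σ)) := by
  refine mul_mem_of_range ?_ hw
  rintro ⟨m, n, j⟩
  have hj : pmono ρ σ j ∈ Submodule.span ℂ (Set.range (pmono ρ σ)) :=
    Submodule.subset_span ⟨j, rfl⟩
  -- each of `K₁^{±1}`, `K₂^{±1}` is a toral monomial
  have ht : ∀ m' n' : ℤ, (tor ρ σ m' n' : Vsl3 (ρ : ℂ) (σ : ℂ)) * vmono ρ σ (m, n, j) ∈
      Submodule.span ℂ (Set.range (vmono ρ σ)) := by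
    intro m' n'
    rw [vmono, ← mul_assoc, ← Units.val_mul, tor_mul]
    exact tor_mul_pspan ρ σ _ _ hj
  fin_cases i
  · change vE₁ ρ σ * vmono ρ σ (m, n, j) ∈ _
    obtain ⟨d, hd⟩ := e1_tor ρ σ m n
    rw [vmono, ← mul_assoc, hd, smul_mul_assoc, mul_assoc]
    exact Submodule.smul_mem _ _ (tor_mul_pspan ρ σ _ _ (e1_mul_pspan ρ σ hj))
  · change vE₂ ρ σ * vmono ρ σ (m, n, j) ∈ _
    obtain ⟨d, hd⟩ := e2_tor ρ σ m n
    rw [vmono, ← mul_assoc, hd, smul_mul_assoc, mul_assoc]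
    exact Submodule.smul_mem _ _ (tor_mul_pspan ρ σ _ _ (e2_mul_pspan ρ σ hj))
  · have := ht 1 0
    simpa [tor, uK₁, K₁, K₁inv] using this
  · have := ht (-1) 0
    simpa [tor, uK₁, K₁, K₁inv] using this
  · have := ht 0 1
    simpa [tor, uK₂, K₂, K₂inv] using this
  · have := ht 0 (-1)
    simpa [tor, uK₂, K₂, K₂inv] using this

theorem mul_mem_span (x : FreeAlgebra ℂ (Fin 6)) : ∀ w ∈ Submodule.span ℂ (Set.range (vmono ρ σ)),
    RingQuot.mkAlgHom ℂ (VRel ρ σ) x * w ∈ Submodule.span ℂ (Set.range (vmono ρ σ)) := by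
  induction x with
  | grade0 r =>
    intro w hw
    rw [AlgHom.commutes, ← Algebra.smul_def]
    exact Submodule.smul_mem _ _ hw
  | grade1 i => exact fun w hw => gen_mul_span ρ σ i hw
  | mul a b ha hb =>
    intro w hw
    rw [map_mul, mul_assoc]
    exact ha _ (hb _ hw)
  | add a b ha hb =>
    intro w hw
    rw [map_add, add_mul]
    exact Submodule.add_mem _ (ha _ hw) (hb _ hw)

theorem mem_span_vmono (v : Vsl3 (ρ : ℂ) (σ : ℂ)) :
    v ∈ Submodule.span ℂ (Set.range (vmono ρ σ)) := by
  obtain ⟨x, rfl⟩ := RingQuot.mkAlgHom_surjective ℂ (VRel ρ σ) v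
  have h1 : (1 : Vsl3 (ρ : ℂ) (σ : ℂ)) ∈ Submodule.span ℂ (Set.range (vmono ρ σ)) :=
    Submodule.subset_span ⟨(0, 0, 0, 0, 0), by simp [vmono, pmono, tor_zero]⟩
  simpa using mul_mem_span ρ σ x 1 h1

end Model

/-! ### Leading terms and weights -/

/-- `f` has its leading term at `g`: the coefficient at `g` is nonzero and all other points of the
support have strictly smaller `y`-exponent. -/
def Lead {ρ σ : ℂˣ} (f : QT ρ σ) (g : QLat) : Prop :=
  QT.co g f ≠ 0 ∧ ∀ h, QT.co h f ≠ 0 → h = g ∨ h.2.2.1 < g.2.2.1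

/-- `f` is homogeneous of weight `X α₁ + Y α₂`. -/
def HomWt {ρ σ : ℂˣ} (f : QT ρ σ) (X Y : ℤ) : Prop :=
  ∀ h, QT.co h f ≠ 0 → wX h = X ∧ wY h = Y

section LeadWeight

variable {ρ σ : ℂˣ}

theorem Lead.mul {f f' : QT ρ σ} {g g' : QLat} (h : Lead f g) (h' : Lead f' g') :
    Lead (f * f') (g + g') := by
  refine ⟨?_, ?_⟩
  · rw [QT.co_mul_unique]
    · exact mul_ne_zero (mul_ne_zero h.1 h'.1) (Units.ne_zero _)
    · intro a b ha hb hab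
      have h1 : a.2.2.1 + b.2.2.1 = g.2.2.1 + g'.2.2.1 := congrArg (fun t : QLat => t.2.2.1) hab
      rcases h.2 a ha with rfl | h2
      · exact ⟨rfl, add_left_cancel hab⟩
      · rcases h'.2 b hb with rfl | h3
        · exact ⟨add_right_cancel hab, rfl⟩
        · omega
  · intro k hk
    obtain ⟨a, b, ha, hb, rfl⟩ := QT.co_mul_ne_zero hk
    rcases h.2 a ha with rfl | h2 <;> rcases h'.2 b hb with rfl | h3
    · exact Or.inl rfl
    all_goals
      right
      simp only [Prod.snd_add, Prod.fst_add]
      omega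

theorem lead_e (g : QLat) {c : ℂ} (hc : c ≠ 0) : Lead (QT.e g c : QT ρ σ) g := by
  refine ⟨by rwa [QT.co_e_same], fun h hh => Or.inl ?_⟩
  rw [QT.co_e] at hh
  by_contra hne
  exact hh (if_neg (Ne.symm hne))

theorem Lead.pow {f : QT ρ σ} {g : QLat} (h : Lead f g) (n : ℕ) : Lead (f ^ n) (n • g) := by
  induction n with
  | zero => rw [pow_zero, zero_smul]; exact lead_e 0 one_ne_zero
  | succ n ih => rw [pow_succ, succ_nsmul]; exact ih.mul h

theorem HomWt.mul {f f' : QT ρ σ} {X Y X' Y' : ℤ} (h : HomWt f X Y) (h' : HomWt f' X' Y') :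
    HomWt (f * f') (X + X') (Y + Y') := by
  intro k hk
  obtain ⟨a, b, ha, hb, rfl⟩ := QT.co_mul_ne_zero hk
  have h1 := h a ha
  have h2 := h' b hb
  simp only [wX, wY, Prod.snd_add, Prod.fst_add] at *
  omega

theorem homWt_e (g : QLat) (c : ℂ) : HomWt (QT.e g c : QT ρ σ) (wX g) (wY g) := by
  intro h hh
  rw [QT.co_e] at hh
  have : g = h := by
    by_contra hne
    exact hh (if_neg hne)
  subst this
  exact ⟨rfl, rfl⟩

theorem HomWt.add {f f' : QT ρ σ} {X Y : ℤ} (h : HomWt f X Y) (h' : HomWt f' X Y) :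
    HomWt (f + f') X Y := by
  intro k hk
  by_cases h1 : QT.co k f = 0
  · refine h' k fun h2 => hk ?_
    rw [map_add, h1, h2, add_zero]
  · exact h k h1

theorem HomWt.pow {f : QT ρ σ} {X Y : ℤ} (h : HomWt f X Y) (n : ℕ) :
    HomWt (f ^ n) (n * X) (n * Y) := by
  induction n with
  | zero =>
    have := homWt_e (ρ := ρ) (σ := σ) 0 1
    simpa [wX, wY, QT.one_def] using this
  | succ n ih =>
    have := ih.mul h
    rw [pow_succ]
    push_cast
    simpa only [add_mul, one_mul] using this

variable (ρ σ)

/-- The lattice point of the leading term of `vmono i`. -/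
def pt (i : ℤ × ℤ × ℕ × ℕ × ℕ) : QLat := (i.1, i.2.1, i.2.2.1, i.2.2.2.1, i.2.2.2.2)

theorem pt_injective : Function.Injective pt := by
  rintro ⟨m, n, a, b, c⟩ ⟨m', n', a', b', c'⟩ h
  simp only [pt, Prod.mk.injEq, Nat.cast_inj] at h
  simp only [Prod.mk.injEq]
  exact h

theorem lead_vmono (hrs : (ρ : ℂ) ^ 3 ≠ (σ : ℂ) ^ 3) (i : ℤ × ℤ × ℕ × ℕ × ℕ) :
    Lead (phi ρ σ (vmono ρ σ i)) (pt i) := by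
  obtain ⟨m, n, a, b, c⟩ := i
  have h2 : Lead (phi ρ σ (vE₂ ρ σ)) (0, 0, 1, 0, 0) := by
    rw [phi_E₂]
    refine ⟨by simp [QT.co_e], fun h hh => ?_⟩
    rw [map_add, QT.co_e, QT.co_e] at hh
    by_cases h1 : (0, 0, 1, 0, 0) = h
    · exact Or.inl h1.symm
    · by_cases h3 : (0, 0, 0, 1, -1) = h
      · subst h3; right; norm_num
      · simp [h1, h3] at hh
  have h1 : Lead (phi ρ σ (vE₁ ρ σ)) (0, 0, 0, 0, 1) := by
    rw [phi_E₁]; exact lead_e _ one_ne_zero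
  have h3 : Lead (phi ρ σ (vE₃ ρ σ)) (0, 0, 0, 1, 0) := by
    rw [phi_E₃]; exact lead_e _ (sub_ne_zero.2 hrs)
  have h0 : Lead (phi ρ σ (tor ρ σ m n : Vsl3 (ρ : ℂ) (σ : ℂ))) (m, n, 0, 0, 0) := by
    rw [phi_tor]; exact lead_e _ one_ne_zero
  have := h0.mul ((h2.pow a).mul ((h3.pow b).mul (h1.pow c)))
  convert this using 1
  · simp only [vmono, pmono, map_mul, map_pow]
  · simp [pt]

theorem homWt_vmono (i : ℤ × ℤ × ℕ × ℕ × ℕ) :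
    HomWt (phi ρ σ (vmono ρ σ i)) (wX (pt i)) (wY (pt i)) := by
  obtain ⟨m, n, a, b, c⟩ := i
  have h2 : HomWt (phi ρ σ (vE₂ ρ σ)) 0 1 := by
    rw [phi_E₂]
    exact (homWt_e (0, 0, 1, 0, 0) 1).add (homWt_e (0, 0, 0, 1, -1) 1)
  have h1 : HomWt (phi ρ σ (vE₁ ρ σ)) 1 0 := by
    rw [phi_E₁]; exact homWt_e (0, 0, 0, 0, 1) 1
  have h3 : HomWt (phi ρ σ (vE₃ ρ σ)) 1 1 := by
    rw [phi_E₃]; exact homWt_e (0, 0, 0, 1, 0) _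
  have h0 : HomWt (phi ρ σ (tor ρ σ m n : Vsl3 (ρ : ℂ) (σ : ℂ))) 0 0 := by
    rw [phi_tor]; exact homWt_e (m, n, 0, 0, 0) _
  have := h0.mul ((h2.pow a).mul ((h3.pow b).mul (h1.pow c)))
  convert this using 1
  · simp only [vmono, pmono, map_mul, map_pow]
  · simp [pt, wX]
  · simp [pt, wY]

theorem exists_finsupp (v : Vsl3 (ρ : ℂ) (σ : ℂ)) :
    ∃ f : (ℤ × ℤ × ℕ × ℕ × ℕ) →₀ ℂ, v = ∑ i ∈ f.support, f i • vmono ρ σ i := by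
  obtain ⟨f, hf⟩ := Finsupp.mem_span_range_iff_exists_finsupp.1 (mem_span_vmono ρ σ v)
  exact ⟨f, hf.symm⟩

/-- The map to the quantum torus is injective: at the leading point of an ordered monomial with
maximal `E₂`-exponent, no other monomial of the expansion contributes. -/
theorem phi_injective (hrs : (ρ : ℂ) ^ 3 ≠ (σ : ℂ) ^ 3) : Function.Injective (phi ρ σ) := by
  rw [injective_iff_map_eq_zero]
  intro v hv
  obtain ⟨f, rfl⟩ := exists_finsupp ρ σ v
  by_contra hne
  have hsupp : f.support.Nonempty := by
    rw [Finset.nonempty_iff_ne_empty]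
    intro h0
    rw [h0, Finset.sum_empty] at hne
    exact hne rfl
  obtain ⟨i, hi, hmax⟩ := f.support.exists_max_image (fun i => i.2.2.1) hsupp
  have h1 : QT.co (pt i) (phi ρ σ (∑ i ∈ f.support, f i • vmono ρ σ i)) =
      f i * QT.co (pt i) (phi ρ σ (vmono ρ σ i)) := by
    rw [map_sum, map_sum, Finset.sum_eq_single i]
    · rw [map_smul, map_smul, smul_eq_mul]
    · intro j hj hji
      rw [map_smul, map_smul]
      by_contra hc
      rcases (lead_vmono ρ σ hrs j).2 (pt i) (fun h0 => hc (by rw [h0, smul_zero])) with h2 | h2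
      · exact hji (pt_injective h2).symm
      · have := hmax j hj
        simp only [pt] at h2
        omega
    · exact fun h => absurd hi h
  rw [hv, map_zero] at h1
  exact mul_ne_zero (Finsupp.mem_support_iff.1 hi) (lead_vmono ρ σ hrs i).1 h1.symm

theorem wt_nonneg (v : Vsl3 (ρ : ℂ) (σ : ℂ)) (h : QLat) (hh : QT.co h (phi ρ σ v) ≠ 0) :
    0 ≤ wX h ∧ 0 ≤ wY h := by
  obtain ⟨f, rfl⟩ := exists_finsupp ρ σ v
  rw [map_sum, map_sum] at hh
  obtain ⟨i, hi, hne⟩ := Finset.exists_ne_zero_of_sum_ne_zero hh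
  rw [map_smul, map_smul] at hne
  have := homWt_vmono ρ σ i h (fun h0 => hne (by rw [h0, smul_zero]))
  rw [this.1, this.2]
  simp only [wX, wY, pt]
  omega

/-- An element whose image is homogeneous is a combination of ordered monomials of that weight. -/
theorem eq_sum_of_homWt (hrs : (ρ : ℂ) ^ 3 ≠ (σ : ℂ) ^ 3) (v : Vsl3 (ρ : ℂ) (σ : ℂ)) {X Y : ℤ}
    (hv : HomWt (phi ρ σ v) X Y) :
    ∃ (s : Finset (ℤ × ℤ × ℕ × ℕ × ℕ)) (f : ℤ × ℤ × ℕ × ℕ × ℕ → ℂ),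
      (∀ i ∈ s, wX (pt i) = X ∧ wY (pt i) = Y) ∧ v = ∑ i ∈ s, f i • vmono ρ σ i := by
  obtain ⟨f, hf⟩ := exists_finsupp ρ σ v
  refine ⟨{i ∈ f.support | wX (pt i) = X ∧ wY (pt i) = Y}, f,
    fun i hi => (Finset.mem_filter.1 hi).2, phi_injective ρ σ hrs (QT.ext_co fun h => ?_)⟩
  by_cases hw : wX h = X ∧ wY h = Y
  · conv_lhs => rw [hf]
    rw [map_sum, map_sum, map_sum, map_sum, Finset.sum_filter]
    refine Finset.sum_congr rfl fun i _ => ?_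
    split_ifs with hi
    · rfl
    · rw [map_smul, map_smul]
      by_contra hc
      have := homWt_vmono ρ σ i h (fun h0 => hc (by rw [h0, smul_zero]))
      exact hi ⟨this.1.symm.trans hw.1, this.2.symm.trans hw.2⟩
  · have h1 : QT.co h (phi ρ σ v) = 0 := by
      by_contra hc
      exact hw (hv h hc)
    rw [h1, map_sum, map_sum]
    refine (Finset.sum_eq_zero fun i hi => ?_).symm
    rw [map_smul, map_smul]
    by_contra hc
    have := homWt_vmono ρ σ i h (fun h0 => hc (by rw [h0, smul_zero]))
    have hi' := (Finset.mem_filter.1 hi).2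
    exact hw ⟨this.1.trans hi'.1, this.2.trans hi'.2⟩

theorem vmono_zero (m n : ℤ) :
    vmono ρ σ (m, n, 0, 0, 0) = (tor ρ σ m n : Vsl3 (ρ : ℂ) (σ : ℂ)) := by
  simp [vmono, pmono]

/-- Invertible elements of `V` are scalar multiples of toral monomials. -/
theorem eq_tor_of_mul_eq_one (hrs : (ρ : ℂ) ^ 3 ≠ (σ : ℂ) ^ 3) {u v : Vsl3 (ρ : ℂ) (σ : ℂ)}
    (huv : u * v = 1 ∨ v * u = 1) :
    ∃ (c : ℂ) (m n : ℤ), c ≠ 0 ∧ u = c • (tor ρ σ m n : Vsl3 (ρ : ℂ) (σ : ℂ)) := by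
  obtain ⟨g, c, c', hc, hc', h1, h2⟩ : ∃ g c c', c ≠ 0 ∧ c' ≠ 0 ∧ phi ρ σ u = QT.e g c ∧
      phi ρ σ v = QT.e (-g) c' := by
    rcases huv with h | h
    · exact QT.eq_e_of_mul_eq_one (by rw [← map_mul, h, map_one])
    · obtain ⟨g, c, c', hc, hc', h1, h2⟩ :=
        QT.eq_e_of_mul_eq_one (f := phi ρ σ v) (f' := phi ρ σ u) (by rw [← map_mul, h, map_one])
      exact ⟨-g, c', c, hc', hc, h2, by rwa [neg_neg]⟩
  have hg : QT.co g (phi ρ σ u) ≠ 0 := by rwa [h1, QT.co_e_same]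
  -- the weights of `u` and of its inverse are opposite and both nonnegative
  have w1 := wt_nonneg ρ σ u g hg
  have w2 := wt_nonneg ρ σ v (-g) (by rwa [h2, QT.co_e_same])
  have w3 : wX g = 0 ∧ wY g = 0 := by
    simp only [wX, wY, Prod.snd_neg, Prod.fst_neg] at *
    omega
  have hw : HomWt (phi ρ σ u) 0 0 := by
    rw [h1]
    have := homWt_e (ρ := ρ) (σ := σ) g c
    rwa [w3.1, w3.2] at this
  obtain ⟨s, f, hs, hu⟩ := eq_sum_of_homWt ρ σ hrs u hw
  have hg' := hg
  rw [hu, map_sum, map_sum] at hg'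
  obtain ⟨i, hi, hne⟩ := Finset.exists_ne_zero_of_sum_ne_zero hg'
  have hi' := hs i hi
  obtain ⟨m, n, x, y, z⟩ := i
  obtain ⟨rfl, rfl, rfl⟩ : x = 0 ∧ y = 0 ∧ z = 0 := by
    simp only [pt, wX, wY] at hi'
    omega
  rw [map_smul, map_smul, vmono_zero, phi_tor, QT.co_e] at hne
  have hgm : (m, n, 0, 0, 0) = g := by
    by_contra hc
    exact hne (by rw [if_neg hc, smul_zero])
  refine ⟨c, m, n, hc, phi_injective ρ σ hrs ?_⟩
  rw [map_smul, phi_tor, h1, QT.smul_e, mul_one, hgm]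

end LeadWeight

/-! ### Automorphisms -/

/-- Six commutation exponents determine the toral exponents of `θ(K₁)`, `θ(K₂)` and the
weights `x₁ α₁ + y₁ α₂`, `x₂ α₁ + y₂ α₂` occurring in `θ(E₁)`, `θ(E₂)`. -/
theorem weights_eq {m₁ n₁ m₂ n₂ x₁ y₁ x₂ y₂ : ℤ} (hx₁ : 0 ≤ x₁) (hy₁ : 0 ≤ y₁) (hx₂ : 0 ≤ x₂)
    (h1 : chiR m₁ n₁ x₁ y₁ = 1) (h2 : chiS m₁ n₁ x₁ y₁ = -2)
    (h3 : chiR m₂ n₂ x₁ y₁ = -1) (h4 : chiS m₂ n₂ x₁ y₁ = -1)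
    (h5 : chiR m₁ n₁ x₂ y₂ = 1) (h6 : chiS m₁ n₁ x₂ y₂ = 1) :
    (m₁ = 1 ∧ n₁ = 0) ∧ (m₂ = 0 ∧ n₂ = 1) ∧ (x₁ = 1 ∧ y₁ = 0) ∧ (x₂ = 0 ∧ y₂ = 1) := by
  simp only [chiR, chiS] at *
  have hdet : 0 < m₁ ^ 2 + m₁ * n₁ + n₁ ^ 2 := by
    by_contra hc
    have hm : m₁ = 0 := by nlinarith [sq_nonneg (m₁ + 2 * n₁), sq_nonneg m₁]
    have hn : n₁ = 0 := by nlinarith [sq_nonneg (n₁ + 2 * m₁), sq_nonneg n₁]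
    rw [hm, hn] at h1
    norm_num at h1
  -- `(x₂ + y₁, y₂ - x₁ + y₁)` lies in the kernel of a matrix of determinant
  -- `3 * (m₁ ^ 2 + m₁ * n₁ + n₁ ^ 2)`
  have d1 : x₂ + y₁ = 0 := by
    have : (m₁ ^ 2 + m₁ * n₁ + n₁ ^ 2) * (x₂ + y₁) = 0 := by
      have hR : (x₂ + y₁) * (m₁ - n₁) + (y₂ - x₁ + y₁) * (m₁ + 2 * n₁) = 0 := by
        linear_combination h5 + h2 + h1
      have hS : -(x₂ + y₁) * (2 * m₁ + n₁) + (y₂ - x₁ + y₁) * (m₁ - n₁) = 0 := by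
        linear_combination h6 - h1
      have : 3 * ((m₁ ^ 2 + m₁ * n₁ + n₁ ^ 2) * (x₂ + y₁)) = 0 := by
        linear_combination (m₁ - n₁) * hR - (m₁ + 2 * n₁) * hS
      omega
    exact (mul_eq_zero.1 this).resolve_left hdet.ne'
  obtain ⟨rfl, rfl⟩ : x₂ = 0 ∧ y₁ = 0 := by omega
  have e1 : m₁ * x₁ = 1 := by linarith
  obtain ⟨rfl, rfl⟩ : m₁ = 1 ∧ x₁ = 1 := by
    rcases Int.mul_eq_one_iff_eq_one_or_neg_one.1 e1 with h | h <;> omega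
  obtain rfl : n₁ = 0 := by omega
  omega

section Automorphism

variable (ρ σ : ℂˣ)

/-- Comparing coefficients at `h` in a commutation relation with a toral element. -/
theorem chi_eq (hI : ∀ m n : ℤ, ρ ^ m * σ ^ n = 1 → m = 0 ∧ n = 0)
    {u v : Vsl3 (ρ : ℂ) (σ : ℂ)} {c : ℂ} {m n i j : ℤ} (hc : c ≠ 0)
    (hu : u = c • (tor ρ σ m n : Vsl3 (ρ : ℂ) (σ : ℂ)))
    (huv : u * v = ((ρ ^ i * σ ^ j : ℂˣ) : ℂ) • (v * u))
    {h : QLat} (hh : QT.co h (phi ρ σ v) ≠ 0) :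
    chiR m n (wX h) (wY h) = i ∧ chiS m n (wX h) (wY h) = j := by
  have h1 := congrArg (fun w => QT.co ((m, n, 0, 0, 0) + h) (phi ρ σ w)) huv
  simp only [map_mul, map_smul] at h1
  have hpu : phi ρ σ u = QT.e (m, n, 0, 0, 0) c := by
    rw [hu, map_smul, phi_tor, QT.smul_e, mul_one]
  rw [hpu, QT.co_e_mul, add_comm, QT.co_mul_e, smul_eq_mul] at h1
  have h2 : ((coc ρ σ (m, n, 0, 0, 0) h : ℂˣ) : ℂ) =
      ((ρ ^ i * σ ^ j * coc ρ σ h (m, n, 0, 0, 0) : ℂˣ) : ℂ) := by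
    rw [Units.val_mul]
    refine mul_left_cancel₀ (mul_ne_zero hc hh) ?_
    rw [h1]; ring
  have h3 : coc ρ σ (m, n, 0, 0, 0) h = 1 := by
    simp [coc, expR, expS, chiR, chiS, wX, wY]
  have h4 : coc ρ σ h (m, n, 0, 0, 0) =
      ρ ^ (-chiR m n (wX h) (wY h)) * σ ^ (-chiS m n (wX h) (wY h)) := by
    simp [coc, expR, expS]
  have h5 := Units.ext h2
  rw [h3, h4, mul_mul_mul_comm, ← zpow_add, ← zpow_add] at h5
  have := hI _ _ h5.symm
  omega

theorem exists_co_ne_zero {f : QT ρ σ} (hf : f ≠ 0) : ∃ h, QT.co h f ≠ 0 := by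
  by_contra hc
  push Not at hc
  exact hf (QT.ext_co fun g => by rw [hc g, map_zero])

theorem mul_right_cancel_V (hrs : (ρ : ℂ) ^ 3 ≠ (σ : ℂ) ^ 3) {u v w : Vsl3 (ρ : ℂ) (σ : ℂ)}
    (hw : w ≠ 0) (h : u * w = v * w) : u = v := by
  have hinj := phi_injective ρ σ hrs
  by_contra hne
  refine QT.mul_ne_zero (f := phi ρ σ (u - v)) (f' := phi ρ σ w) ?_ ?_ ?_
  · rw [← map_zero (phi ρ σ)]
    exact hinj.ne (sub_ne_zero.2 hne)
  · rw [← map_zero (phi ρ σ)]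
    exact hinj.ne hw
  · rw [← map_mul, sub_mul, h, sub_self, map_zero]

theorem E₁_ne_zero : vE₁ (ρ : ℂ) (σ : ℂ) ≠ 0 := by
  intro h
  have := congrArg (fun v => QT.co (0, 0, 0, 0, 1) (phi ρ σ v)) h
  simp [phi_E₁, QT.co_e] at this

theorem co_phi_E₂ : QT.co (0, 0, 1, 0, 0) (phi ρ σ (vE₂ ρ σ)) = 1 ∧
    QT.co (0, 0, 0, 1, -1) (phi ρ σ (vE₂ ρ σ)) = 1 := by
  constructor <;> simp [phi_E₂, QT.co_e]

theorem E₂_ne_zero : vE₂ (ρ : ℂ) (σ : ℂ) ≠ 0 := by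
  intro h
  have := (co_phi_E₂ ρ σ).1
  simp [h] at this

/-- An automorphism rescales `K₁` and `K₂` and preserves the weights of `E₁` and `E₂`. -/
theorem aut_weights (hI : ∀ m n : ℤ, ρ ^ m * σ ^ n = 1 → m = 0 ∧ n = 0)
    (hrs : (ρ : ℂ) ^ 3 ≠ (σ : ℂ) ^ 3)
    (θ : Vsl3 (ρ : ℂ) (σ : ℂ) ≃ₐ[ℂ] Vsl3 (ρ : ℂ) (σ : ℂ)) :
    (∃ c : ℂ, c ≠ 0 ∧ θ (K₁ ρ σ) = c • K₁ (ρ : ℂ) (σ : ℂ)) ∧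
    (∃ c : ℂ, c ≠ 0 ∧ θ (K₂ ρ σ) = c • K₂ (ρ : ℂ) (σ : ℂ)) ∧
    HomWt (phi ρ σ (θ (vE₁ ρ σ))) 1 0 ∧ HomWt (phi ρ σ (θ (vE₂ ρ σ))) 0 1 := by
  obtain ⟨c₁, m₁, n₁, hc₁, hK₁⟩ := eq_tor_of_mul_eq_one ρ σ hrs (u := θ (K₁ ρ σ))
    (v := θ (K₁inv ρ σ)) (Or.inl (by rw [← map_mul, k1_mul_inv, map_one]))
  obtain ⟨c₂, m₂, n₂, hc₂, hK₂⟩ := eq_tor_of_mul_eq_one ρ σ hrs (u := θ (K₂ ρ σ))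
    (v := θ (K₂inv ρ σ)) (Or.inl (by rw [← map_mul, k2_mul_inv, map_one]))
  have r11 : θ (K₁ ρ σ) * θ (vE₁ ρ σ) =
      ((ρ ^ (1 : ℤ) * σ ^ (-2 : ℤ) : ℂˣ) : ℂ) • (θ (vE₁ ρ σ) * θ (K₁ ρ σ)) := by
    rw [← map_mul, k1_e1, map_smul, map_mul]
    congr 1
    simp [zpow_neg]
  have r21 : θ (K₂ ρ σ) * θ (vE₁ ρ σ) =
      ((ρ ^ (-1 : ℤ) * σ ^ (-1 : ℤ) : ℂˣ) : ℂ) • (θ (vE₁ ρ σ) * θ (K₂ ρ σ)) := by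
    rw [← map_mul, k2_e1, map_smul, map_mul]
    congr 1
    simp
  have r12 : θ (K₁ ρ σ) * θ (vE₂ ρ σ) =
      ((ρ ^ (1 : ℤ) * σ ^ (1 : ℤ) : ℂˣ) : ℂ) • (θ (vE₂ ρ σ) * θ (K₁ ρ σ)) := by
    rw [← map_mul, k1_e2, map_smul, map_mul]
    congr 1
    simp
  have hne : ∀ v : Vsl3 (ρ : ℂ) (σ : ℂ), v ≠ 0 → ∃ h, QT.co h (phi ρ σ (θ v)) ≠ 0 := by
    intro v hv
    refine exists_co_ne_zero ρ σ ?_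
    rw [← map_zero (phi ρ σ)]
    refine (phi_injective ρ σ hrs).ne ?_
    rw [← map_zero θ]
    exact θ.injective.ne hv
  have key : ∀ h₁ h₂, QT.co h₁ (phi ρ σ (θ (vE₁ ρ σ))) ≠ 0 →
      QT.co h₂ (phi ρ σ (θ (vE₂ ρ σ))) ≠ 0 → (m₁ = 1 ∧ n₁ = 0) ∧ (m₂ = 0 ∧ n₂ = 1) ∧
        (wX h₁ = 1 ∧ wY h₁ = 0) ∧ (wX h₂ = 0 ∧ wY h₂ = 1) := by
    intro h₁ h₂ hh₁ hh₂
    have a1 := chi_eq ρ σ hI hc₁ hK₁ r11 hh₁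
    have a2 := chi_eq ρ σ hI hc₂ hK₂ r21 hh₁
    have a3 := chi_eq ρ σ hI hc₁ hK₁ r12 hh₂
    have b1 := wt_nonneg ρ σ _ _ hh₁
    have b2 := wt_nonneg ρ σ _ _ hh₂
    exact weights_eq b1.1 b1.2 b2.1 a1.1 a1.2 a2.1 a2.2 a3.1 a3.2
  obtain ⟨h₁, hh₁⟩ := hne _ (E₁_ne_zero ρ σ)
  obtain ⟨h₂, hh₂⟩ := hne _ (E₂_ne_zero ρ σ)
  obtain ⟨⟨rfl, rfl⟩, ⟨rfl, rfl⟩, -, -⟩ := key h₁ h₂ hh₁ hh₂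
  refine ⟨⟨c₁, hc₁, ?_⟩, ⟨c₂, hc₂, ?_⟩, fun h hh => (key h h₂ hh hh₂).2.2.1,
    fun h hh => (key h₁ h hh₁ hh).2.2.2⟩
  · rw [hK₁]; simp [tor, uK₁]
  · rw [hK₂]; simp [tor, uK₂]

theorem factor_E₁ (hrs : (ρ : ℂ) ^ 3 ≠ (σ : ℂ) ^ 3) (v : Vsl3 (ρ : ℂ) (σ : ℂ))
    (hv : HomWt (phi ρ σ v) 1 0) : ∃ p, v = p * vE₁ ρ σ := by
  obtain ⟨s, f, hs, hv'⟩ := eq_sum_of_homWt ρ σ hrs v hv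
  refine ⟨∑ i ∈ s, f i • (tor ρ σ i.1 i.2.1 : Vsl3 (ρ : ℂ) (σ : ℂ)), ?_⟩
  rw [hv', Finset.sum_mul]
  refine Finset.sum_congr rfl ?_
  rintro ⟨m, n, a, b, c⟩ hi
  have := hs _ hi
  simp only [wX, wY, pt] at this
  obtain ⟨rfl, rfl, rfl⟩ : a = 0 ∧ b = 0 ∧ c = 1 := by omega
  simp [vmono, pmono]

theorem factor_E₂ (hrs : (ρ : ℂ) ^ 3 ≠ (σ : ℂ) ^ 3) (v : Vsl3 (ρ : ℂ) (σ : ℂ))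
    (hv : HomWt (phi ρ σ v) 0 1) : ∃ p, v = p * vE₂ ρ σ := by
  obtain ⟨s, f, hs, hv'⟩ := eq_sum_of_homWt ρ σ hrs v hv
  refine ⟨∑ i ∈ s, f i • (tor ρ σ i.1 i.2.1 : Vsl3 (ρ : ℂ) (σ : ℂ)), ?_⟩
  rw [hv', Finset.sum_mul]
  refine Finset.sum_congr rfl ?_
  rintro ⟨m, n, a, b, c⟩ hi
  have := hs _ hi
  simp only [wX, wY, pt] at this
  obtain ⟨rfl, rfl, rfl⟩ : a = 1 ∧ b = 0 ∧ c = 0 := by omega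
  simp [vmono, pmono]

/-- If `θ` and its inverse both send `w` into `V w`, then `θ w` is a toral multiple of `w`. -/
theorem eq_tor_mul (hrs : (ρ : ℂ) ^ 3 ≠ (σ : ℂ) ^ 3)
    (θ : Vsl3 (ρ : ℂ) (σ : ℂ) ≃ₐ[ℂ] Vsl3 (ρ : ℂ) (σ : ℂ)) {w : Vsl3 (ρ : ℂ) (σ : ℂ)} (hw : w ≠ 0)
    (h1 : ∃ p, θ w = p * w) (h2 : ∃ q, θ.symm w = q * w) :
    ∃ (c : ℂ) (m n : ℤ), c ≠ 0 ∧ θ w = c • ((tor ρ σ m n : Vsl3 (ρ : ℂ) (σ : ℂ)) * w) := by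
  obtain ⟨p, hp⟩ := h1
  obtain ⟨q, hq⟩ := h2
  have h3 : θ q * p = 1 := by
    refine mul_right_cancel_V ρ σ hrs hw ?_
    rw [mul_assoc, ← hp, ← map_mul, ← hq, AlgEquiv.apply_symm_apply, one_mul]
  obtain ⟨c, m, n, hc, rfl⟩ := eq_tor_of_mul_eq_one ρ σ hrs (Or.inr h3)
  exact ⟨c, m, n, hc, by rw [hp, smul_mul_assoc]⟩

/-- The coefficient at `2X + Y` of the Serre relation for a monomial at `X` and an element with
`Y` in its support: the commutation factor of `X` and `Y` is `r` or `s`. -/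
theorem serre_coeff (hI : ∀ m n : ℤ, ρ ^ m * σ ^ n = 1 → m = 0 ∧ n = 0) {X Y : QLat} {α : ℂ}
    {F : QT ρ σ} (hα : α ≠ 0) (hF : QT.co Y F ≠ 0)
    (h : QT.e X α * QT.e X α * F - ((ρ : ℂ) ^ 3 + (σ : ℂ) ^ 3) • (QT.e X α * F * QT.e X α)
      + ((ρ : ℂ) ^ 3 * (σ : ℂ) ^ 3) • (F * QT.e X α * QT.e X α) = 0) :
    (expR X Y = expR Y X + 3 ∧ expS X Y = expS Y X) ∨
      (expR X Y = expR Y X ∧ expS X Y = expS Y X + 3) := by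
  have h1 := congrArg (QT.co (X + Y + X)) h
  have e1 : QT.co (X + Y + X) (QT.e X α * QT.e X α * F) =
      α * (α * QT.co Y F * coc ρ σ X Y) * (coc ρ σ X X * coc ρ σ X Y) := by
    rw [mul_assoc, show X + Y + X = X + (X + Y) by abel, QT.co_e_mul, QT.co_e_mul, coc_add_right,
      Units.val_mul]
  have e2 : QT.co (X + Y + X) (QT.e X α * F * QT.e X α) =
      (α * QT.co Y F * coc ρ σ X Y) * α * (coc ρ σ X X * coc ρ σ Y X) := by
    rw [QT.co_mul_e, QT.co_e_mul, coc_add_left, Units.val_mul]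
  have e3 : QT.co (X + Y + X) (F * QT.e X α * QT.e X α) =
      (QT.co Y F * α * coc ρ σ Y X) * α * (coc ρ σ X X * coc ρ σ Y X) := by
    rw [show X + Y + X = (Y + X) + X by abel, QT.co_mul_e, QT.co_mul_e, coc_add_left,
      Units.val_mul, mul_comm (coc ρ σ Y X : ℂ)]
  rw [map_add, map_sub, map_smul, map_smul, e1, e2, e3, map_zero, smul_eq_mul, smul_eq_mul] at h1
  have h2 : (α * α * QT.co Y F * coc ρ σ X X) *
      (((coc ρ σ X Y : ℂ) - (ρ : ℂ) ^ 3 * coc ρ σ Y X) *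
        ((coc ρ σ X Y : ℂ) - (σ : ℂ) ^ 3 * coc ρ σ Y X)) = 0 := by
    linear_combination h1
  have h3 := (mul_eq_zero.1 h2).resolve_left
    (mul_ne_zero (mul_ne_zero (mul_ne_zero hα hα) hF) (Units.ne_zero _))
  have aux : ∀ i j : ℤ, coc ρ σ X Y = ρ ^ i * σ ^ j * coc ρ σ Y X →
      expR X Y = expR Y X + i ∧ expS X Y = expS Y X + j := by
    intro i j hij
    have h4 : ρ ^ (expR X Y - (expR Y X + i)) * σ ^ (expS X Y - (expS Y X + j)) = 1 := by
      rw [zpow_sub, zpow_sub, mul_mul_mul_comm, ← coc, hij, coc, zpow_add, zpow_add, ← mul_inv,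
        mul_inv_eq_one]
      ac_rfl
    have := hI _ _ h4
    omega
  rcases mul_eq_zero.1 h3 with h4 | h4
  · left
    have := aux 3 0 (Units.ext (by
      rw [zpow_zero, mul_one, Units.val_mul]
      simpa using sub_eq_zero.1 h4))
    simpa using this
  · right
    have := aux 0 3 (Units.ext (by
      rw [zpow_zero, one_mul, Units.val_mul]
      simpa using sub_eq_zero.1 h4))
    simpa using this

/-- The Serre relation forces the constraints on the toral exponents. -/
theorem exponents_eq (hI : ∀ m n : ℤ, ρ ^ m * σ ^ n = 1 → m = 0 ∧ n = 0)
    (θ : Vsl3 (ρ : ℂ) (σ : ℂ) ≃ₐ[ℂ] Vsl3 (ρ : ℂ) (σ : ℂ)) {b₁ b₂ : ℂ} {a b c d : ℤ}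
    (hb₁ : b₁ ≠ 0) (hb₂ : b₂ ≠ 0)
    (h1 : θ (vE₁ ρ σ) = b₁ • ((tor ρ σ a b : Vsl3 (ρ : ℂ) (σ : ℂ)) * vE₁ ρ σ))
    (h2 : θ (vE₂ ρ σ) = b₂ • ((tor ρ σ c d : Vsl3 (ρ : ℂ) (σ : ℂ)) * vE₂ ρ σ)) :
    b = c ∧ a + b + d = 0 := by
  have hX : phi ρ σ (θ (vE₁ ρ σ)) = QT.e (a, b, 0, 0, 1) b₁ := by
    rw [h1, map_smul, map_mul, phi_tor, phi_E₁, QT.e_mul_e, QT.smul_e]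
    simp [coc, expR, expS, chiR, chiS, wX, wY]
  have hco : ∀ g, QT.co g (phi ρ σ (vE₂ ρ σ)) = 1 →
      QT.co ((c, d, 0, 0, 0) + g) (phi ρ σ (θ (vE₂ ρ σ))) ≠ 0 := by
    intro g hg
    rw [h2, map_smul, map_mul, phi_tor, map_smul, QT.co_e_mul, hg, smul_eq_mul]
    exact mul_ne_zero hb₂ (by simp)
  have hs := congrArg (fun v => phi ρ σ (θ v)) (v_serre1 ρ σ)
  simp only [map_add, map_sub, map_smul, map_mul, map_zero, hX] at hs
  have s1 := serre_coeff ρ σ hI hb₁ (hco _ (co_phi_E₂ ρ σ).1) hs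
  have s2 := serre_coeff ρ σ hI hb₁ (hco _ (co_phi_E₂ ρ σ).2) hs
  simp only [expR, expS, chiR, chiS, wX, wY, Prod.mk_add_mk] at s1 s2
  omega

end Automorphism

/-- any `ℂ`-algebra automorphism `θ` of `Ǔ^{≥0}_{r,s}(sl₃)` is of the form
`θ(K_l) = a_l K_l`, `θ(E₁) = b₁ K₁^a K₂^b E₁`, `θ(E₂) = b₂ K₁^c K₂^d E₂` with
`a_l, b_l ∈ ℂ*`, `b = c` and `a + b + d = 0`. -/
theorem stmt9 (ρ σ : ℂ) (hρ : ρ ≠ 0) (hσ : σ ≠ 0)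
    (hind : ∀ m n : ℤ, (ρ ^ 3) ^ m * (σ ^ 3) ^ n = 1 → m = 0 ∧ n = 0)
    (θ : Vsl3 ρ σ ≃ₐ[ℂ] Vsl3 ρ σ) :
    ∃ (a₁ a₂ b₁ b₂ : ℂ) (a b c d : ℤ),
      a₁ ≠ 0 ∧ a₂ ≠ 0 ∧ b₁ ≠ 0 ∧ b₂ ≠ 0 ∧
      b = c ∧ a + b + d = 0 ∧
      θ (K₁ ρ σ) = a₁ • K₁ ρ σ ∧ θ (K₂ ρ σ) = a₂ • K₂ ρ σ ∧
      θ (vE₁ ρ σ) = b₁ • (K₁z ρ σ a * K₂z ρ σ b * vE₁ ρ σ) ∧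
      θ (vE₂ ρ σ) = b₂ • (K₁z ρ σ c * K₂z ρ σ d * vE₂ ρ σ) := by
  lift ρ to ℂˣ using hρ.isUnit
  lift σ to ℂˣ using hσ.isUnit
  have hI : ∀ m n : ℤ, ρ ^ m * σ ^ n = 1 → m = 0 ∧ n = 0 := by
    intro m n h
    refine hind m n ?_
    have h1 := congrArg (fun u : ℂˣ => ((u ^ 3 : ℂˣ) : ℂ)) h
    simp only [one_pow, Units.val_one, mul_pow, Units.val_mul, Units.val_pow_eq_pow_val,
      Units.val_zpow_eq_zpow_val] at h1
    rw [← h1, ← zpow_natCast, ← zpow_natCast, ← zpow_natCast, ← zpow_natCast, ← zpow_mul,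
      ← zpow_mul, ← zpow_mul, ← zpow_mul, mul_comm m, mul_comm n]
  have hrs : (ρ : ℂ) ^ 3 ≠ (σ : ℂ) ^ 3 := by
    intro h
    have := hind 1 (-1) (by
      rw [h, zpow_one, zpow_neg_one]
      exact mul_inv_cancel₀ (pow_ne_zero 3 hσ))
    omega
  obtain ⟨⟨a₁, ha₁, hK₁⟩, ⟨a₂, ha₂, hK₂⟩, w₁, w₂⟩ := aut_weights ρ σ hI hrs θ
  obtain ⟨-, -, w₁', w₂'⟩ := aut_weights ρ σ hI hrs θ.symm
  obtain ⟨b₁, a, b, hb₁, hE₁⟩ := eq_tor_mul ρ σ hrs θ (E₁_ne_zero ρ σ)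
    (factor_E₁ ρ σ hrs _ w₁) (factor_E₁ ρ σ hrs _ w₁')
  obtain ⟨b₂, c, d, hb₂, hE₂⟩ := eq_tor_mul ρ σ hrs θ (E₂_ne_zero ρ σ)
    (factor_E₂ ρ σ hrs _ w₂) (factor_E₂ ρ σ hrs _ w₂')
  obtain ⟨hbc, habd⟩ := exponents_eq ρ σ hI θ hb₁ hb₂ hE₁ hE₂
  refine ⟨a₁, a₂, b₁, b₂, a, b, c, d, ha₁, ha₂, hb₁, hb₂, hbc, habd, hK₁, hK₂, ?_, ?_⟩
  · rw [hE₁, tor_eq]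
  · rw [hE₂, tor_eq]
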